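/- (Guard_KAB for Yahalom.) If evs ∈ ya, A ∉ bad, B ∉ bad and Says Server A ⟨Crypt (shrK A) ⟨Agent B, Key K, Nonce NA, Nonce NB⟩, Crypt (shrK B) ⟨Agent A, Key K⟩⟩ ∈ set evs, then GuardK K {shrK A, shrK B} (spies evs), i.e. the session key K is guarded in all traffic by the shared keys of A and B. -/

import Mathlib

inductive agent : Type
  | Server : agent
  | Friend : ℕ → agent
  | Spy : agent
deriving DecidableEq

inductive msg : Type
  | Agent : agent → msg
  | Number : ℕ → msg
  | Nonce : ℕ → msg
  | Key : ℕ → msg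
  | Hash : msg → msg
  | MPair : msg → msg → msg
  | Crypt : ℕ → msg → msg
deriving DecidableEq

inductive partsP (H : Set msg) : msg → Prop
  | Inj : ∀ X, X ∈ H → partsP H X
  | Fst : ∀ X Y, partsP H (msg.MPair X Y) → partsP H X
  | Snd : ∀ X Y, partsP H (msg.MPair X Y) → partsP H Y
  | Body : ∀ K X, partsP H (msg.Crypt K X) → partsP H X

/-- `parts H`: sub-components of messages of `H`. -/
def parts (H : Set msg) : Set msg := {X | partsP H X}

inductive analzP (invKey : ℕ → ℕ) (H : Set msg) : msg → Prop
  | Inj : ∀ X, X ∈ H → analzP invKey H X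
  | Fst : ∀ X Y, analzP invKey H (msg.MPair X Y) → analzP invKey H X
  | Snd : ∀ X Y, analzP invKey H (msg.MPair X Y) → analzP invKey H Y
  | Decrypt : ∀ K X, analzP invKey H (msg.Crypt K X) →
      analzP invKey H (msg.Key (invKey K)) → analzP invKey H X

/-- `analz invKey H`: what can be obtained by decomposing and decrypting messages of `H`. -/
def analz (invKey : ℕ → ℕ) (H : Set msg) : Set msg := {X | analzP invKey H X}

inductive synthP (H : Set msg) : msg → Prop
  | Inj : ∀ X, X ∈ H → synthP H X
  | Ag : ∀ a, synthP H (msg.Agent a)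
  | Num : ∀ n, synthP H (msg.Number n)
  | Hsh : ∀ X, synthP H X → synthP H (msg.Hash X)
  | Pr : ∀ X Y, synthP H X → synthP H Y → synthP H (msg.MPair X Y)
  | Cry : ∀ K X, synthP H X → msg.Key K ∈ H → synthP H (msg.Crypt K X)

/-- `synth H`: messages that can be synthesized from `H`. -/
def synth (H : Set msg) : Set msg := {X | synthP H X}

inductive guardP (invKey : ℕ → ℕ) (n : ℕ) (Ks : Set ℕ) : msg → Prop
  | No_Nonce : ∀ X, msg.Nonce n ∉ parts {X} → guardP invKey n Ks X
  | Guard : ∀ K X, invKey K ∈ Ks → guardP invKey n Ks (msg.Crypt K X)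
  | Cry : ∀ K X, guardP invKey n Ks X → guardP invKey n Ks (msg.Crypt K X)
  | Pr : ∀ X Y, guardP invKey n Ks X → guardP invKey n Ks Y →
      guardP invKey n Ks (msg.MPair X Y)

/-- `guard n Ks`: messages in which `Nonce n` is guarded by the keys of `Ks`. -/
def guardMsg (invKey : ℕ → ℕ) (n : ℕ) (Ks : Set ℕ) : Set msg := {X | guardP invKey n Ks X}

/-- `Guard n Ks H`: every message of `H` lies in `guard n Ks`. -/
def Guard (invKey : ℕ → ℕ) (n : ℕ) (Ks : Set ℕ) (H : Set msg) : Prop :=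
  ∀ X ∈ H, X ∈ guardMsg invKey n Ks
inductive event : Type
  | Says : agent → agent → msg → event
deriving DecidableEq

def msgOf : event → msg
  | event.Says _ _ X => X

/-- Set of messages sent in a trace. -/
def sent (evs : List event) : Set msg :=
  {X | ∃ A B, event.Says A B X ∈ evs}
inductive guardKP (invKey : ℕ → ℕ) (k : ℕ) (Ks : Set ℕ) : msg → Prop
  | No_Key : ∀ X, msg.Key k ∉ parts {X} → guardKP invKey k Ks X
  | Guard : ∀ K X, invKey K ∈ Ks → guardKP invKey k Ks (msg.Crypt K X)
  | Cry : ∀ K X, guardKP invKey k Ks X → guardKP invKey k Ks (msg.Crypt K X)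
  | Pr : ∀ X Y, guardKP invKey k Ks X → guardKP invKey k Ks Y →
      guardKP invKey k Ks (msg.MPair X Y)

/-- `guardK k Ks`: messages in which `Key k` is guarded by the keys of `Ks`. -/
def guardKMsg (invKey : ℕ → ℕ) (k : ℕ) (Ks : Set ℕ) : Set msg := {X | guardKP invKey k Ks X}

/-- `GuardK k Ks H`: every message of `H` lies in `guardK k Ks`. -/
def GuardK (invKey : ℕ → ℕ) (k : ℕ) (Ks : Set ℕ) (H : Set msg) : Prop :=
  ∀ X ∈ H, X ∈ guardKMsg invKey k Ks
/-- Initial knowledge of each agent in a shared-key infrastructure: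
every agent knows its own shared key; the spy moreover knows
the shared keys of the bad agents. -/
def initStateS (shrK : agent → ℕ) (bad : Set agent) : agent → Set msg :=
  fun A =>
    match A with
    | agent.Spy => {X | ∃ B ∈ bad, X = msg.Key (shrK B)}
    | _ => {msg.Key (shrK A)}

/-- `spies evs`: the shared keys of the bad agents and every message sent in `evs`. -/
def spiesS (shrK : agent → ℕ) (bad : Set agent) (evs : List event) : Set msg :=
  initStateS shrK bad agent.Spy ∪ sent evs

/-- `used evs`: parts of all agents' initial knowledge and of all messages sent in `evs`. -/
def usedS (shrK : agent → ℕ) (bad : Set agent) (evs : List event) : Set msg :=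
  parts ((⋃ A, initStateS shrK bad A) ∪ sent evs)
/-- The Yahalom protocol. -/
inductive ya (invKey : ℕ → ℕ) (shrK : agent → ℕ) (bad : Set agent) : List event → Prop
  | Nil : ya invKey shrK bad []
  | Fake : ∀ evs B X, ya invKey shrK bad evs →
      X ∈ synth (analz invKey (spiesS shrK bad evs)) →
      ya invKey shrK bad (event.Says agent.Spy B X :: evs)
  | YA1 : ∀ evs A B NA, ya invKey shrK bad evs →
      msg.Nonce NA ∉ usedS shrK bad evs →
      ya invKey shrK bad (event.Says A B (msg.MPair (msg.Agent A) (msg.Nonce NA)) :: evs)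
  | YA2 : ∀ evs A A' B NA NB, ya invKey shrK bad evs →
      msg.Nonce NB ∉ usedS shrK bad evs →
      event.Says A' B (msg.MPair (msg.Agent A) (msg.Nonce NA)) ∈ evs →
      ya invKey shrK bad (event.Says B agent.Server (msg.MPair (msg.Agent B)
        (msg.Crypt (shrK B)
          (msg.MPair (msg.Agent A) (msg.MPair (msg.Nonce NA) (msg.Nonce NB))))) :: evs)
  | YA3 : ∀ evs A B B' NA NB K, ya invKey shrK bad evs →
      msg.Key K ∉ usedS shrK bad evs →
      event.Says B' agent.Server (msg.MPair (msg.Agent B)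
        (msg.Crypt (shrK B)
          (msg.MPair (msg.Agent A) (msg.MPair (msg.Nonce NA) (msg.Nonce NB))))) ∈ evs →
      ya invKey shrK bad (event.Says agent.Server A (msg.MPair
        (msg.Crypt (shrK A) (msg.MPair (msg.Agent B)
          (msg.MPair (msg.Key K) (msg.MPair (msg.Nonce NA) (msg.Nonce NB)))))
        (msg.Crypt (shrK B) (msg.MPair (msg.Agent A) (msg.Key K)))) :: evs)
  | YA4 : ∀ evs A B S NA NB K Y, ya invKey shrK bad evs →
      event.Says A B (msg.MPair (msg.Agent A) (msg.Nonce NA)) ∈ evs →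
      event.Says S A (msg.MPair
        (msg.Crypt (shrK A) (msg.MPair (msg.Agent B)
          (msg.MPair (msg.Key K) (msg.MPair (msg.Nonce NA) (msg.Nonce NB))))) Y) ∈ evs →
      ya invKey shrK bad (event.Says A B (msg.MPair Y (msg.Crypt K (msg.Nonce NB))) :: evs)

/-- `hasKey k X`: the key `k` occurs as a part of `X`. -/
def hasKey (k : ℕ) : msg → Prop
  | msg.Key j => j = k
  | msg.MPair X Y => hasKey k X ∨ hasKey k Y
  | msg.Crypt _ X => hasKey k X
  | _ => False

theorem partsP_hasKey {H : Set msg} {Z : msg} {k : ℕ} (h : partsP H Z) :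
    hasKey k Z → ∃ X ∈ H, hasKey k X := by
  induction h with
  | Inj X hX => exact fun hk => ⟨X, hX, hk⟩
  | Fst X Y _ ih => exact fun hk => ih (Or.inl hk)
  | Snd X Y _ ih => exact fun hk => ih (Or.inr hk)
  | Body K X _ ih => exact fun hk => ih hk

theorem hasKey_partsP {H : Set msg} {k : ℕ} (Z : msg) (h : partsP H Z) (hk : hasKey k Z) :
    partsP H (msg.Key k) := by
  induction Z with
  | Key j => simp only [hasKey] at hk; subst hk; exact h
  | MPair X Y ihX ihY =>
    rcases hk with hk | hk
    · exact ihX (partsP.Fst _ _ h) hk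
    · exact ihY (partsP.Snd _ _ h) hk
  | Crypt K X ih => exact ih (partsP.Body _ _ h) hk
  | Agent _ => exact hk.elim
  | Number _ => exact hk.elim
  | Nonce _ => exact hk.elim
  | Hash _ _ => exact hk.elim

theorem guardKP_of_not {invKey : ℕ → ℕ} {k : ℕ} {Ks : Set ℕ} {X : msg} (h : ¬ hasKey k X) :
    guardKP invKey k Ks X := by
  refine guardKP.No_Key X fun hp => ?_
  obtain ⟨Y, hY, hk⟩ := partsP_hasKey (k := k) hp rfl
  rw [Set.mem_singleton_iff.1 hY] at hk
  exact h hk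

theorem not_of_notParts {k : ℕ} {X : msg} (h : msg.Key k ∉ parts {X}) : ¬ hasKey k X :=
  fun hk => h (hasKey_partsP X (partsP.Inj X rfl) hk)

theorem guardKP_pair {invKey : ℕ → ℕ} {k : ℕ} {Ks : Set ℕ} {X Y : msg}
    (h : guardKP invKey k Ks (msg.MPair X Y)) : guardKP invKey k Ks X ∧ guardKP invKey k Ks Y := by
  cases h with
  | No_Key _ h =>
    have := not_of_notParts h
    exact ⟨guardKP_of_not fun hk => this (Or.inl hk), guardKP_of_not fun hk => this (Or.inr hk)⟩
  | Pr _ _ h1 h2 => exact ⟨h1, h2⟩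

theorem analz_not {invKey : ℕ → ℕ} {H : Set msg} {k : ℕ} (hH : ∀ X ∈ H, ¬ hasKey k X) {X : msg}
    (h : analzP invKey H X) : ¬ hasKey k X := by
  induction h with
  | Inj X hX => exact hH X hX
  | Fst X Y _ ih => exact fun hk => ih (Or.inl hk)
  | Snd X Y _ ih => exact fun hk => ih (Or.inr hk)
  | Decrypt K X _ _ ih _ => exact ih

theorem synth_not {H : Set msg} {k : ℕ} (hH : ∀ X ∈ H, ¬ hasKey k X) {X : msg}
    (h : synthP H X) : ¬ hasKey k X := by
  induction h with
  | Inj X hX => exact hH X hX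
  | Ag a => exact id
  | Num n => exact id
  | Hsh X _ _ => exact id
  | Pr X Y _ _ ih1 ih2 => exact fun hk => hk.elim ih1 ih2
  | Cry K X _ _ ih => exact ih

theorem analz_guard {invKey : ℕ → ℕ} {H : Set msg} {k : ℕ} {Ks : Set ℕ}
    (hH : ∀ X ∈ H, guardKP invKey k Ks X) (hK : ∀ j ∈ Ks, ¬ analzP invKey H (msg.Key j)) {X : msg}
    (h : analzP invKey H X) : guardKP invKey k Ks X := by
  induction h with
  | Inj X hX => exact hH X hX
  | Fst X Y _ ih => exact (guardKP_pair ih).1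
  | Snd X Y _ ih => exact (guardKP_pair ih).2
  | Decrypt K X _ h2 ih _ =>
    cases ih with
    | No_Key _ h => exact guardKP_of_not (fun hk => not_of_notParts h hk)
    | Guard _ _ h => exact (hK _ h h2).elim
    | Cry _ _ h => exact h

theorem synth_guard {invKey : ℕ → ℕ} {H : Set msg} {k : ℕ} {Ks : Set ℕ}
    (hH : ∀ X ∈ H, guardKP invKey k Ks X) {X : msg}
    (h : synthP H X) : guardKP invKey k Ks X := by
  induction h with
  | Inj X hX => exact hH X hX
  | Ag a => exact guardKP_of_not id
  | Num n => exact guardKP_of_not id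
  | Hsh X _ _ => exact guardKP_of_not id
  | Pr X Y _ _ ih1 ih2 => exact guardKP.Pr _ _ ih1 ih2
  | Cry K X _ _ ih => exact guardKP.Cry _ _ ih

theorem spies_cons {shrK : agent → ℕ} {bad : Set agent} {P : msg → Prop} {evs : List event}
    {A B : agent} {X : msg} (h : ∀ Z ∈ spiesS shrK bad evs, P Z) (hX : P X) :
    ∀ Z ∈ spiesS shrK bad (event.Says A B X :: evs), P Z := by
  rintro Z (hZ | ⟨A', B', hZ⟩)
  · exact h Z (Or.inl hZ)
  · rcases List.mem_cons.1 hZ with hZ | hZ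
    · cases hZ; exact hX
    · exact h Z (Or.inr ⟨A', B', hZ⟩)

theorem spies_of_mem {shrK : agent → ℕ} {bad : Set agent} {evs : List event}
    {A B : agent} {X : msg} (h : event.Says A B X ∈ evs) : X ∈ spiesS shrK bad evs :=
  Or.inr ⟨A, B, h⟩

theorem used_of_spies {shrK : agent → ℕ} {bad : Set agent} {evs : List event} {k : ℕ}
    {X : msg} (h : X ∈ spiesS shrK bad evs) (hk : hasKey k X) :
    msg.Key k ∈ usedS shrK bad evs := by
  refine hasKey_partsP X (partsP.Inj X ?_) hk
  rcases h with h | h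
  · exact Or.inl (Set.mem_iUnion.2 ⟨_, h⟩)
  · exact Or.inr h

theorem used_shrK {shrK : agent → ℕ} {bad : Set agent} (hspy : agent.Spy ∈ bad)
    (evs : List event) (C : agent) : msg.Key (shrK C) ∈ usedS shrK bad evs := by
  refine partsP.Inj _ (Or.inl (Set.mem_iUnion.2 ⟨C, ?_⟩))
  cases C with
  | Server => exact rfl
  | Friend n => exact rfl
  | Spy => exact ⟨_, hspy, rfl⟩

theorem spies_not_shrK {invKey : ℕ → ℕ} {shrK : agent → ℕ} {bad : Set agent}
    (hinj : Function.Injective shrK) (hspy : agent.Spy ∈ bad) {C : agent} (hC : C ∉ bad)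
    {evs : List event} (h : ya invKey shrK bad evs) :
    ∀ X ∈ spiesS shrK bad evs, ¬ hasKey (shrK C) X := by
  induction h with
  | Nil =>
    rintro X (⟨D, hD, rfl⟩ | ⟨_, _, h⟩)
    · intro h
      have := hinj h
      exact hC (this ▸ hD)
    · cases h
  | Fake evs B X _ hX ih => exact spies_cons ih (synth_not (fun Y hY => analz_not ih hY) hX)
  | YA1 evs A B NA _ _ ih => exact spies_cons ih (by simp [hasKey])
  | YA2 evs A A' B NA NB _ _ _ ih => exact spies_cons ih (by simp [hasKey])
  | YA3 evs A B B' NA NB K _ hK _ ih =>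
    refine spies_cons ih ?_
    have : K ≠ shrK C := by rintro rfl; exact hK (used_shrK hspy evs C)
    simp [hasKey, this]
  | YA4 evs A B S NA NB K Y _ _ h2 ih =>
    refine spies_cons ih ?_
    have := ih _ (spies_of_mem h2)
    simp only [hasKey] at this ⊢
    tauto

/-- `Guard_KAB` for Yahalom: the session key `K` is guarded by the shared keys
of `A` and `B`. -/
theorem Guard_KAB
    (invKey : ℕ → ℕ) (shrK : agent → ℕ) (bad : Set agent)
    (hinv : ∀ K, invKey (invKey K) = K)
    (hsym : ∀ A, invKey (shrK A) = shrK A)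
    (hinj : Function.Injective shrK)
    (hspy : agent.Spy ∈ bad)
    (evs : List event) (A B : agent) (K NA NB : ℕ)
    (hevs : ya invKey shrK bad evs) (hA : A ∉ bad) (hB : B ∉ bad)
    (hsays : event.Says agent.Server A (msg.MPair
      (msg.Crypt (shrK A) (msg.MPair (msg.Agent B)
        (msg.MPair (msg.Key K) (msg.MPair (msg.Nonce NA) (msg.Nonce NB)))))
      (msg.Crypt (shrK B) (msg.MPair (msg.Agent A) (msg.Key K)))) ∈ evs) :
    GuardK invKey K {shrK A, shrK B} (spiesS shrK bad evs) := by
  have hKs : ∀ evs, ya invKey shrK bad evs → ∀ j ∈ ({shrK A, shrK B} : Set ℕ),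
      ¬ analzP invKey (spiesS shrK bad evs) (msg.Key j) := by
    rintro evs h j (rfl | rfl) hj
    · exact analz_not (spies_not_shrK hinj hspy hA h) hj rfl
    · exact analz_not (spies_not_shrK hinj hspy hB h) hj rfl
  change ∀ X ∈ spiesS shrK bad evs, guardKP invKey K {shrK A, shrK B} X
  induction hevs with
  | Nil => cases hsays
  | Fake evs B' X h hX ih =>
    have hm : _ ∈ evs := (List.mem_cons.1 hsays).resolve_left (by
      intro he; cases he)
    exact spies_cons (ih hm)
      (synth_guard (fun Y hY => analz_guard (ih hm) (hKs evs h) hY) hX)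
  | YA1 evs A' B' NA' h _ ih =>
    have hm : _ ∈ evs := (List.mem_cons.1 hsays).resolve_left (by simp)
    exact spies_cons (ih hm) (guardKP_of_not (by simp [hasKey]))
  | YA2 evs A1 A' B' NA' NB' h _ _ ih =>
    have hm : _ ∈ evs := (List.mem_cons.1 hsays).resolve_left (by simp)
    exact spies_cons (ih hm) (guardKP_of_not (by simp [hasKey]))
  | YA3 evs A1 B1 B' NA' NB' K' h hK _ ih =>
    rcases List.mem_cons.1 hsays with he | hm
    · cases he
      refine spies_cons (fun Z hZ => guardKP_of_not fun hk => hK (used_of_spies hZ hk)) ?_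
      exact guardKP.Pr _ _ (guardKP.Guard _ _ (by simp [hsym])) (guardKP.Guard _ _ (by simp [hsym]))
    · refine spies_cons (ih hm) (guardKP_of_not ?_)
      have : K' ≠ K := by
        rintro rfl
        exact hK (used_of_spies (spies_of_mem hm) (by simp [hasKey]))
      simp [hasKey, this]
  | YA4 evs A1 B1 S NA' NB' K' Y h _ h2 ih =>
    have hm : _ ∈ evs := (List.mem_cons.1 hsays).resolve_left (by simp)
    exact spies_cons (ih hm) (guardKP.Pr _ _ (guardKP_pair (ih hm _ (spies_of_mem h2))).2
      (guardKP_of_not (by simp [hasKey])))
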